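/- Let U(R) = 10(1+R²/3)^{−2} − (20R²/3)(1+R²/3)^{−3}, let φ(·,ξ) be the generalized eigenfunctions of 𝓛 (φ(0,ξ)=0, ∂_Rφ(0,ξ)=1), and let F(ξ,η) = ∫₀^∞ U(R) φ(R,ξ) φ(R,η) dR. Then for every integer k ≥ 1 there exist smooth functions U^{odd}_{kj} (0 ≤ j ≤ k−1) and U^{even}_{kℓ} (0 ≤ ℓ ≤ k) on [0,∞), with U^{odd}_{kj} odd and U^{even}_{kℓ} even, satisfying the decay bounds (1+R)|U^{odd}_{kj}(R)| + |U^{even}_{kℓ}(R)| ≤ C_k (1+R)^{−4−2k} for all j, ℓ, such that for all ξ, η > 0: (η − ξ)^{2k} F(ξ,η) = ∫₀^∞ [ Σ_{j=0}^{k−1} ξ^j U^{odd}_{kj}(R) ∂_Rφ(R,ξ) + Σ_{ℓ=0}^{k} ξ^ℓ U^{even}_{kℓ}(R) φ(R,ξ) ] φ(R,η) dR. -/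

import Mathlib

open MeasureTheory

noncomputable section

namespace CommutatorIdentity

/-- `U(R) = 10(1+R²/3)^{-2} - (20R²/3)(1+R²/3)^{-3}`, from `[𝓛, R∂_R] = 2𝓛 + U`. -/
def U (R : ℝ) : ℝ := 10 / (1 + R ^ 2 / 3) ^ 2 - (20 * R ^ 2 / 3) / (1 + R ^ 2 / 3) ^ 3

/-!
If `𝓛 f = ξ f` and `𝓛 g = η g` with `f`, `g` vanishing at `0`, Green's formula gives
`(η - ξ) ∫ (b f' + a f) g = ∫ ([𝓛, b ∂ + a] f) g` as soon as `b` is odd and `a`, `b` decay.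
Replacing `f''` by `-(V + ξ) f`, the commutator is again of first order, with coefficients
`-b'' - 2 a'` and `-a'' + 2 (V + ξ) b' + V' b`: parity is preserved, `ξ` enters linearly, and each
derivative gains one power of decay. Two such steps turn orders of decay `(d + 1, d)` of `(b, a)`
into `(d + 3, d + 2)`, so `2 k` steps starting from `(0, U)` give the weights. The eigenfunctions
and their derivatives are bounded because the energy `f'² + (V + ξ) f²` is decreasing.
-/

section Development

open Asymptotics Filter Finset Set Topology
open scoped ContDiff

section Symbols

/-- The weight `(1 + |R|)⁻¹`, whose powers measure decay. -/
def decay (R : ℝ) : ℝ := (1 + |R|)⁻¹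

lemma decay_pos (R : ℝ) : 0 < decay R := by
  unfold decay
  positivity

lemma decay_le_one (R : ℝ) : decay R ≤ 1 :=
  inv_le_one_of_one_le₀ (le_add_of_nonneg_right (abs_nonneg R))

lemma decay_pow_isBigO_decay_pow {m n : ℕ} (h : n ≤ m) {l : Filter ℝ} :
    (decay ^ m) =O[l] (decay ^ n) := by
  refine IsBigO.of_norm_le fun R => ?_
  rw [Pi.pow_apply, Real.norm_of_nonneg (pow_nonneg (decay_pos R).le m)]
  exact pow_le_pow_of_le_one (decay_pos R).le (decay_le_one R) h

lemma tendsto_decay_sq_atTop : Tendsto (decay ^ 2) atTop (𝓝 0) := by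
  have h : Tendsto decay atTop (𝓝 0) :=
    (tendsto_atTop_add_const_left _ 1 tendsto_abs_atTop_atTop).inv_tendsto_atTop
  exact zero_pow (M₀ := ℝ) two_ne_zero ▸ h.pow 2

lemma integrable_decay_sq : Integrable (decay ^ 2) := by
  refine (integrable_one_add_norm (E := ℝ) (r := 2) (by simp)).congr (.of_forall fun R => ?_)
  simp only [Pi.pow_apply, decay, Real.norm_eq_abs]
  rw [Real.rpow_neg (by positivity), Real.rpow_two, inv_pow]

lemma iteratedDeriv_mul_isBigO {a b : ℝ → ℝ} {d e n : ℕ} (ha : ContDiff ℝ n a)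
    (hb : ContDiff ℝ n b) (hda : ∀ m ≤ n, iteratedDeriv m a =O[⊤] (decay ^ (d + m)))
    (hdb : ∀ m ≤ n, iteratedDeriv m b =O[⊤] (decay ^ (e + m))) :
    iteratedDeriv n (a * b) =O[⊤] (decay ^ (d + e + n)) := by
  have leibniz : iteratedDeriv n (a * b) = fun R => ∑ i ∈ range (n + 1),
      n.choose i * iteratedDeriv i a R * iteratedDeriv (n - i) b R :=
    funext fun R => iteratedDeriv_mul ha.contDiffAt hb.contDiffAt
  rw [leibniz]
  refine IsBigO.fun_sum fun i hi => ?_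
  have hin : i ≤ n := mem_range_succ_iff.1 hi
  rw [show d + e + n = d + i + (e + (n - i)) by omega, pow_add]
  exact ((hda i hin).const_mul_left _).mul (hdb (n - i) (n.sub_le i))

/-- Symbols of order `-d` on the line: smooth functions whose `n`-th derivative is
`O((1 + |R|)^(-d-n))`. The parity of the function is required to be that of `d`, so that
differentiation maps `symbol d` to `symbol (d + 1)`. -/
def symbol (d : ℕ) : Submodule ℝ (ℝ → ℝ) where
  carrier := {a | ContDiff ℝ ∞ a ∧ (∀ R, a (-R) = (-1) ^ d * a R) ∧
    ∀ n, iteratedDeriv n a =O[⊤] (decay ^ (d + n))}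
  zero_mem' := ⟨contDiff_const, fun _ => by simp, fun n => by
    rw [show iteratedDeriv n (0 : ℝ → ℝ) = 0 from funext fun R => by
      simp [Pi.zero_def]]
    exact isBigO_zero _ _⟩
  add_mem' := by
    rintro a b ⟨ha, hpa, hda⟩ ⟨hb, hpb, hdb⟩
    refine ⟨ha.add hb, fun R => by simp [hpa, hpb, mul_add], fun n => ?_⟩
    have h : iteratedDeriv n (a + b) = iteratedDeriv n a + iteratedDeriv n b :=
      funext fun R => iteratedDeriv_add (ha.of_le (mod_cast le_top)).contDiffAt
        (hb.of_le (mod_cast le_top)).contDiffAt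
    rw [h]
    exact (hda n).add (hdb n)
  smul_mem' := by
    rintro t a ⟨ha, hpa, hda⟩
    refine ⟨contDiff_const.smul ha, fun R => by simp [hpa, mul_left_comm], fun n => ?_⟩
    have h : iteratedDeriv n (t • a) = t • iteratedDeriv n a :=
      funext fun R => iteratedDeriv_const_smul_field t a
    rw [h]
    exact (hda n).const_smul_left t

variable {a b : ℝ → ℝ} {d e : ℕ}

lemma contDiff_of_mem_symbol (ha : a ∈ symbol d) : ContDiff ℝ ∞ a := ha.1

lemma differentiable_of_mem_symbol (ha : a ∈ symbol d) : Differentiable ℝ a :=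
  ha.1.differentiable (by simp)

lemma apply_neg_of_mem_symbol (ha : a ∈ symbol d) (R : ℝ) : a (-R) = (-1) ^ d * a R := ha.2.1 R

lemma apply_zero_of_mem_symbol (ha : a ∈ symbol d) (hd : Odd d) : a 0 = 0 := by
  have h := apply_neg_of_mem_symbol ha 0
  rw [neg_zero, hd.neg_one_pow] at h
  linarith

lemma isBigO_of_mem_symbol (ha : a ∈ symbol d) : a =O[⊤] (decay ^ d) := by
  simpa using ha.2.2 0

lemma symbol_le_symbol (h : e ≤ d) (hpar : d % 2 = e % 2) : symbol d ≤ symbol e := by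
  rintro a ⟨ha, hpa, hda⟩
  have hsign : (-1 : ℝ) ^ d = (-1) ^ e := by
    rw [neg_one_pow_eq_pow_mod_two, hpar, ← neg_one_pow_eq_pow_mod_two]
  exact ⟨ha, hsign ▸ hpa, fun n => (hda n).trans (decay_pow_isBigO_decay_pow (by omega))⟩

lemma mul_mem_symbol (ha : a ∈ symbol d) (hb : b ∈ symbol e) : a * b ∈ symbol (d + e) := by
  refine ⟨ha.1.mul hb.1, fun R => ?_, fun n => ?_⟩
  · rw [Pi.mul_apply, Pi.mul_apply, apply_neg_of_mem_symbol ha, apply_neg_of_mem_symbol hb]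
    ring
  · exact iteratedDeriv_mul_isBigO (ha.1.of_le (mod_cast le_top)) (hb.1.of_le (mod_cast le_top))
      (fun m _ => ha.2.2 m) (fun m _ => hb.2.2 m)

lemma deriv_mem_symbol (ha : a ∈ symbol d) : deriv a ∈ symbol (d + 1) := by
  refine ⟨(contDiff_infty_iff_deriv.1 ha.1).2, fun R => ?_, fun n => ?_⟩
  · have h : deriv (fun R => a (-R)) R = deriv (fun R => (-1) ^ d * a R) R := by
      rw [funext (apply_neg_of_mem_symbol ha)]
    rw [deriv_comp_neg, deriv_const_mul _ (differentiable_of_mem_symbol ha R)] at h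
    rw [pow_succ]
    linarith
  · rw [← iteratedDeriv_succ', add_assoc, add_comm 1 n]
    exact ha.2.2 (n + 1)

lemma exists_uniform_bound_of_mem_symbol {c : ℕ → ℝ → ℝ} (hc : ∀ j, c j ∈ symbol d) (N : ℕ) :
    ∃ C, 0 ≤ C ∧ ∀ j < N, ∀ R, 0 ≤ R → |c j R| ≤ C / (1 + R) ^ d := by
  choose C hC_pos hC using fun j => (isBigO_of_mem_symbol (hc j)).exists_nonneg
  refine ⟨∑ j ∈ range N, C j, sum_nonneg fun j _ => hC_pos j, fun j hj R hR => ?_⟩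
  have h : |c j R| ≤ C j / (1 + R) ^ d := by
    simpa [decay, abs_of_nonneg hR, abs_of_nonneg (add_nonneg zero_le_one hR), div_eq_mul_inv]
      using isBigOWith_top.1 (hC j) R
  refine h.trans ?_
  gcongr
  exact single_le_sum (fun i _ => hC_pos i) (mem_range.2 hj)

end Symbols

section Pencils

/-- Polynomials `∑_{j < N} ξ ^ j c_j(R)` of degree less than `N` in the spectral parameter `ξ`,
with coefficients in `symbol d`. -/
def pencil (N d : ℕ) : Submodule ℝ (ℝ → ℝ → ℝ) where
  carrier := {a | ∃ c : ℕ → ℝ → ℝ, (∀ j, c j ∈ symbol d) ∧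
    ∀ ξ, a ξ = ∑ j ∈ range N, ξ ^ j • c j}
  zero_mem' := ⟨0, fun _ => zero_mem _, fun _ => by simp⟩
  add_mem' := by
    rintro _ _ ⟨c, hc, ha⟩ ⟨c', hc', hb⟩
    exact ⟨c + c', fun j => add_mem (hc j) (hc' j), fun ξ => by
      simp [ha, hb, smul_add, sum_add_distrib]⟩
  smul_mem' := by
    rintro t _ ⟨c, hc, ha⟩
    exact ⟨t • c, fun j => Submodule.smul_mem _ t (hc j), fun ξ => by
      simp [ha, smul_sum, smul_comm t]⟩

variable {a : ℝ → ℝ → ℝ} {v : ℝ → ℝ} {N N' d e : ℕ}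

lemma apply_mem_symbol_of_mem_pencil (ha : a ∈ pencil N d) (ξ : ℝ) : a ξ ∈ symbol d := by
  obtain ⟨c, hc, ha⟩ := ha
  rw [ha]
  exact sum_mem fun j _ => Submodule.smul_mem _ _ (hc j)

lemma const_mem_pencil (hv : v ∈ symbol d) : (fun _ => v) ∈ pencil 1 d :=
  ⟨fun _ => v, fun _ => hv, fun ξ => by simp⟩

lemma pencil_le_pencil (hN : N ≤ N') (h : e ≤ d) (hpar : d % 2 = e % 2) :
    pencil N d ≤ pencil N' e := by
  rintro a ⟨c, hc, ha⟩
  refine ⟨fun j => if j < N then c j else 0, fun j => ?_, fun ξ => ?_⟩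
  · dsimp only
    split_ifs
    exacts [symbol_le_symbol h hpar (hc j), zero_mem _]
  · rw [ha, ← sum_subset (range_subset_range.2 hN) fun j _ hj => by simp_all]
    exact sum_congr rfl fun j hj => by simp [mem_range.1 hj]

lemma deriv_mem_pencil (ha : a ∈ pencil N d) : (fun ξ => deriv (a ξ)) ∈ pencil N (d + 1) := by
  obtain ⟨c, hc, ha⟩ := ha
  refine ⟨fun j => deriv (c j), fun j => deriv_mem_symbol (hc j), fun ξ => funext fun R => ?_⟩
  have hdiff (j : ℕ) : DifferentiableAt ℝ (c j) R := differentiable_of_mem_symbol (hc j) R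
  simp only [ha]
  rw [deriv_sum fun j _ => (hdiff j).const_smul _]
  simp [deriv_const_smul_field]

lemma mul_mem_pencil (hv : v ∈ symbol e) (ha : a ∈ pencil N d) :
    (fun ξ => v * a ξ) ∈ pencil N (e + d) := by
  obtain ⟨c, hc, ha⟩ := ha
  exact ⟨fun j => v * c j, fun j => mul_mem_symbol hv (hc j), fun ξ => by
    simp [ha, mul_sum]⟩

lemma smul_mem_pencil (ha : a ∈ pencil N d) : (fun ξ => ξ • a ξ) ∈ pencil (N + 1) d := by
  obtain ⟨c, hc, ha⟩ := ha
  refine ⟨fun j => if j = 0 then 0 else c (j - 1), fun j => ?_, fun ξ => ?_⟩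
  · dsimp only
    split_ifs
    exacts [zero_mem _, hc _]
  · simp [ha, sum_range_succ', smul_sum, smul_smul, pow_succ']

end Pencils

section Commutator

/-- The function `(b ∂ + a) f`. -/
def firstOrder (b a f : ℝ → ℝ) : ℝ → ℝ := b * deriv f + a * f

/-- The coefficient of `∂` in `[𝓛, b ∂ + a]`, where `𝓛 = -∂² - V`. -/
def commutatorOdd (b a : ℝ → ℝ) : ℝ → ℝ := -(deriv (deriv b) + (2 : ℝ) • deriv a)

/-- The zeroth order coefficient of `[𝓛, b ∂ + a]`, where `𝓛 = -∂² - V` and the term in `∂²` has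
been eliminated by `∂² = -(V + ξ)`, valid on functions with `𝓛 f = ξ f`. -/
def commutatorEven (V : ℝ → ℝ) (ξ : ℝ) (b a : ℝ → ℝ) : ℝ → ℝ :=
  -deriv (deriv a) + (2 : ℝ) • (V * deriv b) + (2 : ℝ) • ξ • deriv b + deriv V * b

lemma commutatorOdd_mem_pencil {b a : ℝ → ℝ → ℝ} {M N M' e d e' : ℕ} (hb : b ∈ pencil M e)
    (ha : a ∈ pencil N d) (hM : M ≤ M') (hN : N ≤ M') (he : e' ≤ e + 2) (hd : e' ≤ d + 1)
    (hpe : e % 2 = e' % 2) (hpd : (d + 1) % 2 = e' % 2) :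
    (fun ξ => commutatorOdd (b ξ) (a ξ)) ∈ pencil M' e' :=
  neg_mem (add_mem
    (pencil_le_pencil hM he (by omega) (deriv_mem_pencil (deriv_mem_pencil hb)))
    (Submodule.smul_mem _ _ (pencil_le_pencil hN hd hpd (deriv_mem_pencil ha))))

lemma commutatorEven_mem_pencil {V : ℝ → ℝ} (hV : V ∈ symbol 0) {b a : ℝ → ℝ → ℝ}
    {M N N' e d d' : ℕ} (hb : b ∈ pencil M e) (ha : a ∈ pencil N d) (hM : M + 1 ≤ N')
    (hN : N ≤ N') (he : d' ≤ e + 1) (hd : d' ≤ d + 2) (hpe : (e + 1) % 2 = d' % 2)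
    (hpd : d % 2 = d' % 2) :
    (fun ξ => commutatorEven V ξ (b ξ) (a ξ)) ∈ pencil N' d' := by
  have hb' := deriv_mem_pencil hb
  refine add_mem (add_mem (add_mem (neg_mem ?_) (Submodule.smul_mem _ _ ?_))
    (Submodule.smul_mem _ _ ?_)) ?_
  · exact pencil_le_pencil hN hd (by omega) (deriv_mem_pencil (deriv_mem_pencil ha))
  · exact pencil_le_pencil (by omega) (by omega) (by omega) (mul_mem_pencil hV hb')
  · exact pencil_le_pencil hM he hpe (smul_mem_pencil hb')
  · exact pencil_le_pencil (by omega) (by omega) (by omega)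
      (mul_mem_pencil (deriv_mem_symbol hV) hb)

/-- A solution of `-f'' - V f = ξ f` on the line with `f 0 = 0`. The value of `f' 0` is left free,
since every statement below is linear in `f`. -/
structure IsDirichletEigenfunction (V : ℝ → ℝ) (ξ : ℝ) (f : ℝ → ℝ) : Prop where
  apply_zero : f 0 = 0
  differentiable : Differentiable ℝ f
  differentiable_deriv : Differentiable ℝ (deriv f)
  eigen : ∀ R, -deriv (deriv f) R - V R * f R = ξ * f R

variable {V f g a b : ℝ → ℝ} {ξ η : ℝ}

lemma IsDirichletEigenfunction.hasDerivAt_firstOrder (hf : IsDirichletEigenfunction V ξ f)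
    (hb : Differentiable ℝ b) (ha : Differentiable ℝ a) (R : ℝ) :
    HasDerivAt (firstOrder b a f)
      (firstOrder (deriv b + a) (deriv a - (V * b + ξ • b)) f R) R := by
  refine (((hb R).hasDerivAt.mul (hf.differentiable_deriv R).hasDerivAt).add
    ((ha R).hasDerivAt.mul (hf.differentiable R).hasDerivAt)).congr_deriv ?_
  simp only [firstOrder, Pi.add_apply, Pi.mul_apply, Pi.sub_apply, Pi.smul_apply, smul_eq_mul]
  linear_combination (-b R) * hf.eigen R

lemma IsDirichletEigenfunction.deriv_firstOrder (hf : IsDirichletEigenfunction V ξ f)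
    (hb : Differentiable ℝ b) (ha : Differentiable ℝ a) :
    deriv (firstOrder b a f) = firstOrder (deriv b + a) (deriv a - (V * b + ξ • b)) f :=
  funext fun R => (hf.hasDerivAt_firstOrder hb ha R).deriv

lemma IsDirichletEigenfunction.differentiable_firstOrder {d e : ℕ}
    (hf : IsDirichletEigenfunction V ξ f) (hb : b ∈ symbol e) (ha : a ∈ symbol d) :
    Differentiable ℝ (firstOrder b a f) := fun R =>
  (hf.hasDerivAt_firstOrder (differentiable_of_mem_symbol hb)
    (differentiable_of_mem_symbol ha) R).differentiableAt

lemma IsDirichletEigenfunction.commutator_firstOrder (hf : IsDirichletEigenfunction V ξ f)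
    (hV : Differentiable ℝ V) (hb : ContDiff ℝ 2 b) (ha : ContDiff ℝ 2 a) (R : ℝ) :
    -deriv (deriv (firstOrder b a f)) R - V R * firstOrder b a f R =
      ξ * firstOrder b a f R + firstOrder (commutatorOdd b a) (commutatorEven V ξ b a) f R := by
  have hb₁ : Differentiable ℝ b := hb.differentiable two_ne_zero
  have ha₁ : Differentiable ℝ a := ha.differentiable two_ne_zero
  have hb₂ : Differentiable ℝ (deriv b) := hb.differentiable_deriv_two
  have ha₂ : Differentiable ℝ (deriv a) := ha.differentiable_deriv_two
  have hodd : deriv (deriv b + a) R = deriv (deriv b) R + deriv a R :=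
    deriv_add (hb₂ R) (ha₁ R)
  have heven : deriv (deriv a - (V * b + ξ • b)) R =
      deriv (deriv a) R - (deriv V R * b R + V R * deriv b R + ξ * deriv b R) := by
    rw [deriv_sub (ha₂ R) (((hV.mul hb₁).add (hb₁.const_smul ξ)) R),
      deriv_add ((hV.mul hb₁) R) ((hb₁.const_smul ξ) R), deriv_mul (hV R) (hb₁ R),
      deriv_const_smul _ (hb₁ R), smul_eq_mul]
  rw [hf.deriv_firstOrder hb₁ ha₁, hf.deriv_firstOrder (hb₂.add ha₁)
    (ha₂.sub ((hV.mul hb₁).add (hb₁.const_smul ξ)))]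
  simp only [firstOrder, commutatorOdd, commutatorEven, Pi.add_apply, Pi.sub_apply, Pi.mul_apply,
    Pi.neg_apply, Pi.smul_apply, smul_eq_mul, hodd, heven]
  ring

end Commutator

section Eigenfunctions

variable {V W f g a b : ℝ → ℝ} {ξ η : ℝ} {d e : ℕ}

/-- The energy `f'² + (V + ξ) f²` of a solution of `-f'' - V f = ξ f`. -/
def energy (V : ℝ → ℝ) (ξ : ℝ) (f : ℝ → ℝ) (R : ℝ) : ℝ :=
  deriv f R ^ 2 + (V R + ξ) * f R ^ 2

lemma IsDirichletEigenfunction.hasDerivAt_energy (hf : IsDirichletEigenfunction V ξ f) {R : ℝ}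
    (hV : DifferentiableAt ℝ V R) :
    HasDerivAt (energy V ξ f) (deriv V R * f R ^ 2) R := by
  refine (((hf.differentiable_deriv R).hasDerivAt.pow 2).add
    ((hV.hasDerivAt.add_const ξ).mul ((hf.differentiable R).hasDerivAt.pow 2))).congr_deriv ?_
  simp only [Pi.pow_apply]
  push_cast
  linear_combination (-2 * deriv f R) * hf.eigen R

lemma IsDirichletEigenfunction.antitoneOn_energy (hf : IsDirichletEigenfunction V ξ f)
    (hV : Differentiable ℝ V) (hVanti : AntitoneOn V (Ici 0)) :
    AntitoneOn (energy V ξ f) (Ici 0) := by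
  have hderiv (R : ℝ) := hf.hasDerivAt_energy (hV R)
  refine antitoneOn_of_deriv_nonpos (convex_Ici 0)
    (fun R _ => (hderiv R).continuousAt.continuousWithinAt)
    (fun R _ => (hderiv R).differentiableAt.differentiableWithinAt) fun R hR => ?_
  rw [interior_Ici] at hR
  have hV' : deriv V R ≤ 0 := by
    rw [← derivWithin_of_isOpen isOpen_Ioi hR]
    exact (hVanti.mono Ioi_subset_Ici_self).derivWithin_nonpos
  rw [(hderiv R).deriv]
  exact mul_nonpos_of_nonpos_of_nonneg hV' (sq_nonneg _)

lemma isBigO_one_of_sq_le {l : Filter ℝ} {C : ℝ} (h : ∀ᶠ R in l, f R ^ 2 ≤ C) :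
    f =O[l] (1 : ℝ → ℝ) := by
  refine .of_bound (√C) (h.mono fun R hR => ?_)
  simpa using Real.abs_le_sqrt hR

/-- The potentials `V` for which the commutator argument applies to `-∂² - V`: even symbols of
order zero, whose sign and monotonicity on the half-line make the energy control `f` and `f'`. -/
structure IsAdmissiblePotential (V : ℝ → ℝ) : Prop where
  mem_symbol : V ∈ symbol 0
  antitoneOn : AntitoneOn V (Ici 0)
  nonneg : ∀ R, 0 ≤ R → 0 ≤ V R

lemma IsAdmissiblePotential.differentiable (hV : IsAdmissiblePotential V) : Differentiable ℝ V :=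
  differentiable_of_mem_symbol hV.mem_symbol

lemma IsDirichletEigenfunction.isBigO_one (hf : IsDirichletEigenfunction V ξ f)
    (hV : IsAdmissiblePotential V) (hξ : 0 < ξ) :
    f =O[𝓟 (Ici 0)] (1 : ℝ → ℝ) ∧ deriv f =O[𝓟 (Ici 0)] (1 : ℝ → ℝ) := by
  have henergy (R : ℝ) (hR : 0 ≤ R) : deriv f R ^ 2 + (V R + ξ) * f R ^ 2 ≤ energy V ξ f 0 :=
    hf.antitoneOn_energy hV.differentiable hV.antitoneOn self_mem_Ici hR hR
  refine ⟨isBigO_one_of_sq_le (C := energy V ξ f 0 / ξ) ?_,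
    isBigO_one_of_sq_le (C := energy V ξ f 0) ?_⟩ <;>
  refine eventually_principal.2 fun R hR => ?_
  · rw [le_div_iff₀ hξ]
    nlinarith [henergy R hR, sq_nonneg (deriv f R), mul_nonneg (hV.nonneg R hR) (sq_nonneg (f R))]
  · nlinarith [henergy R hR, mul_nonneg (add_nonneg (hV.nonneg R hR) hξ.le) (sq_nonneg (f R))]

lemma firstOrder_isBigO_decay_sq (hb : b ∈ symbol e) (he : 2 ≤ e) (ha : a ∈ symbol d)
    (hd : 2 ≤ d) (hf : f =O[𝓟 (Ici 0)] (1 : ℝ → ℝ))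
    (hf' : deriv f =O[𝓟 (Ici 0)] (1 : ℝ → ℝ)) :
    firstOrder b a f =O[𝓟 (Ici 0)] (decay ^ 2) := by
  have hdecay {c : ℝ → ℝ} {m : ℕ} (hc : c ∈ symbol m) (hm : 2 ≤ m) :
      c =O[𝓟 (Ici 0)] (decay ^ 2) :=
    ((isBigO_of_mem_symbol hc).mono le_top).trans (decay_pow_isBigO_decay_pow hm)
  simpa [firstOrder] using! ((hdecay hb he).mul hf').add ((hdecay ha hd).mul hf)

lemma tendsto_mul_zero_of_isBigO_decay_sq {h : ℝ → ℝ} (hh : h =O[𝓟 (Ici 0)] (decay ^ 2))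
    (hg : g =O[𝓟 (Ici 0)] (1 : ℝ → ℝ)) : Tendsto (h * g) atTop (𝓝 0) := by
  have hO : (h * g) =O[𝓟 (Ici 0)] (decay ^ 2) := by simpa using! hh.mul hg
  exact (hO.mono (le_principal_iff.2 (Ici_mem_atTop 0))).trans_tendsto tendsto_decay_sq_atTop

lemma integrableOn_mul_of_isBigO_decay_sq {h : ℝ → ℝ} (hh : h =O[𝓟 (Ici 0)] (decay ^ 2))
    (hg : g =O[𝓟 (Ici 0)] (1 : ℝ → ℝ)) (hhc : Continuous h) (hgc : Continuous g) :
    IntegrableOn (h * g) (Ioi 0) := by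
  have hO : (h * g) =O[𝓟 (Ici 0)] (decay ^ 2) := by simpa using! hh.mul hg
  obtain ⟨C, hC⟩ := isBigO_principal.1 hO
  refine Integrable.mono' (integrable_decay_sq.norm.const_mul C).integrableOn
    (hhc.mul hgc).aestronglyMeasurable ?_
  filter_upwards [ae_restrict_mem measurableSet_Ioi] with R hR using hC R (Ioi_subset_Ici_self hR)

lemma integrableOn_firstOrder_mul (hV : IsAdmissiblePotential V) (hξ : 0 < ξ) (hη : 0 < η)
    (hf : IsDirichletEigenfunction V ξ f) (hg : IsDirichletEigenfunction V η g)
    (hb : b ∈ symbol e) (he : 2 ≤ e) (ha : a ∈ symbol d) (hd : 2 ≤ d) :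
    IntegrableOn (firstOrder b a f * g) (Ioi 0) := by
  obtain ⟨hf₀, hf₁⟩ := hf.isBigO_one hV hξ
  refine integrableOn_mul_of_isBigO_decay_sq (firstOrder_isBigO_decay_sq hb he ha hd hf₀ hf₁)
    (hg.isBigO_one hV hη).1 ?_ hg.differentiable.continuous
  exact (hf.differentiable_firstOrder hb ha).continuous

/-- The boundary term is the Wronskian of `h` and `g`, which vanishes at both ends. -/
lemma IsDirichletEigenfunction.green {h r : ℝ → ℝ} (hg : IsDirichletEigenfunction V η g)
    (hV : IsAdmissiblePotential V) (hη : 0 < η) (hh : Differentiable ℝ h)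
    (hh' : Differentiable ℝ (deriv h)) (h_zero : h 0 = 0) (hO : h =O[𝓟 (Ici 0)] (decay ^ 2))
    (hO' : deriv h =O[𝓟 (Ici 0)] (decay ^ 2))
    (heq : ∀ R, -deriv (deriv h) R - V R * h R = ξ * h R + r R)
    (hr : IntegrableOn (r * g) (Ioi 0)) :
    (η - ξ) * ∫ R in Ioi 0, (h * g) R = ∫ R in Ioi 0, (r * g) R := by
  obtain ⟨hg₀, hg₁⟩ := hg.isBigO_one hV hη
  have hderiv (R : ℝ) : HasDerivAt (h * deriv g - deriv h * g)
      ((r * g) R - (η - ξ) * (h * g) R) R := by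
    refine (((hh R).hasDerivAt.mul (hg.differentiable_deriv R).hasDerivAt).sub
      ((hh' R).hasDerivAt.mul (hg.differentiable R).hasDerivAt)).congr_deriv ?_
    simp only [Pi.mul_apply]
    linear_combination g R * heq R - h R * hg.eigen R
  have hlim : Tendsto (h * deriv g - deriv h * g) atTop (𝓝 0) := by
    simpa using! (tendsto_mul_zero_of_isBigO_decay_sq hO hg₁).sub
      (tendsto_mul_zero_of_isBigO_decay_sq hO' hg₀)
  have hhg : IntegrableOn (h * g) (Ioi 0) :=
    integrableOn_mul_of_isBigO_decay_sq hO hg₀ hh.continuous hg.differentiable.continuous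
  have hboundary := integral_Ioi_of_hasDerivAt_of_tendsto' (a := 0) (fun R _ => hderiv R)
    (hr.sub (hhg.const_mul (η - ξ))) hlim
  rw [integral_sub hr (hhg.const_mul _), integral_const_mul, Pi.sub_apply, Pi.mul_apply,
    Pi.mul_apply, h_zero, hg.apply_zero] at hboundary
  linarith

lemma integral_commutator (hV : IsAdmissiblePotential V) (hξ : 0 < ξ) (hη : 0 < η)
    (hf : IsDirichletEigenfunction V ξ f) (hg : IsDirichletEigenfunction V η g)
    (hb : b ∈ symbol 3) (ha : a ∈ symbol 2) :
    (η - ξ) * ∫ R in Ioi 0, (firstOrder b a f * g) R =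
      ∫ R in Ioi 0, (firstOrder (commutatorOdd b a) (commutatorEven V ξ b a) f * g) R := by
  have hdb : deriv b ∈ symbol 4 := deriv_mem_symbol hb
  have hb₁ : deriv b + a ∈ symbol 2 :=
    add_mem (symbol_le_symbol (by norm_num) (by norm_num) hdb) ha
  have ha₁ : deriv a - (V * b + ξ • b) ∈ symbol 3 := by
    have hVb : V * b ∈ symbol 3 := by simpa using mul_mem_symbol hV.mem_symbol hb
    exact sub_mem (deriv_mem_symbol ha) (add_mem hVb (Submodule.smul_mem _ ξ hb))
  have hderiv : deriv (firstOrder b a f) = _ :=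
    hf.deriv_firstOrder (differentiable_of_mem_symbol hb) (differentiable_of_mem_symbol ha)
  have hodd : commutatorOdd b a ∈ symbol 3 := apply_mem_symbol_of_mem_pencil
    (commutatorOdd_mem_pencil (const_mem_pencil hb) (const_mem_pencil ha)
      le_rfl le_rfl (by norm_num) le_rfl rfl rfl) 0
  have heven : commutatorEven V ξ b a ∈ symbol 4 := apply_mem_symbol_of_mem_pencil
    (commutatorEven_mem_pencil hV.mem_symbol (const_mem_pencil hb) (const_mem_pencil ha)
      le_rfl (by norm_num) le_rfl le_rfl rfl rfl) ξ
  obtain ⟨hf₀, hf₁⟩ := hf.isBigO_one hV hξ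
  refine hg.green hV hη (hf.differentiable_firstOrder hb ha) ?_ ?_
    (firstOrder_isBigO_decay_sq hb (by norm_num) ha le_rfl hf₀ hf₁) ?_
    (hf.commutator_firstOrder hV.differentiable (contDiff_infty.1 (contDiff_of_mem_symbol hb) 2)
      (contDiff_infty.1 (contDiff_of_mem_symbol ha) 2))
    (integrableOn_firstOrder_mul hV hξ hη hf hg hodd (by norm_num) heven (by norm_num))
  · exact hderiv ▸ hf.differentiable_firstOrder hb₁ ha₁
  · simp [firstOrder, hf.apply_zero, apply_zero_of_mem_symbol hb (by decide)]
  · exact hderiv ▸ firstOrder_isBigO_decay_sq hb₁ le_rfl ha₁ (by norm_num) hf₀ hf₁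

lemma exists_iterated_commutator (hV : IsAdmissiblePotential V) (hW : W ∈ symbol d) (hd : 2 ≤ d)
    (hpar : Even d) (n : ℕ) :
    ∃ b ∈ pencil ((n + 1) / 2) (d + 1 + 2 * (n / 2)),
      ∃ a ∈ pencil (n / 2 + 1) (d + 2 * ((n + 1) / 2)),
        ∀ ξ > 0, ∀ η > 0, ∀ f g, IsDirichletEigenfunction V ξ f →
          IsDirichletEigenfunction V η g →
            (η - ξ) ^ n * ∫ R in Ioi 0, W R * f R * g R =
              ∫ R in Ioi 0, (firstOrder (b ξ) (a ξ) f * g) R := by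
  have hd₂ : d % 2 = 0 := Nat.even_iff.1 hpar
  induction n with
  | zero => exact ⟨0, zero_mem _, fun _ => W, const_mem_pencil hW, by simp [firstOrder]⟩
  | succ n ih =>
    obtain ⟨b, hb, a, ha, h⟩ := ih
    refine ⟨_, commutatorOdd_mem_pencil hb ha (by omega) (by omega) (by omega) (by omega)
        (by omega) (by omega),
      _, commutatorEven_mem_pencil hV.mem_symbol hb ha (by omega) (by omega) (by omega) (by omega)
        (by omega) (by omega), fun ξ hξ η hη f g hf hg => ?_⟩
    have hbξ : b ξ ∈ symbol 3 :=
      symbol_le_symbol (by omega) (by omega) (apply_mem_symbol_of_mem_pencil hb ξ)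
    have haξ : a ξ ∈ symbol 2 :=
      symbol_le_symbol (by omega) (by omega) (apply_mem_symbol_of_mem_pencil ha ξ)
    rw [pow_succ', mul_assoc, h ξ hξ η hη f g hf hg,
      integral_commutator hV hξ hη hf hg hbξ haξ]

end Eigenfunctions

section Potential

lemma one_add_sq_div_pos (R : ℝ) : 0 < 1 + R ^ 2 / 3 := by positivity

/-- The function `(1 + R² / 3)⁻¹`, in terms of which the potential is `5 w²`. -/
def w (R : ℝ) : ℝ := (1 + R ^ 2 / 3)⁻¹

lemma contDiff_w : ContDiff ℝ ∞ w :=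
  ContDiff.inv (by fun_prop) fun R => (one_add_sq_div_pos R).ne'

lemma deriv_w : deriv w = (-(2 / 3) : ℝ) • (id * w * w) := by
  funext R
  have hpos := one_add_sq_div_pos R
  have h : HasDerivAt (fun R : ℝ => 1 + R ^ 2 / 3) (2 * R / 3) R := by
    simpa using ((hasDerivAt_pow 2 R).div_const 3).const_add 1
  have hw : deriv w R = _ := (h.inv hpos.ne').deriv
  rw [hw]
  simp only [w, Pi.smul_apply, Pi.mul_apply, id, smul_eq_mul]
  field_simp

lemma deriv_id_mul_w : deriv (id * w) = (2 : ℝ) • (w * w) - w := by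
  funext R
  rw [deriv_mul differentiableAt_id (contDiff_w.differentiable (by simp) R), deriv_w]
  simp only [w, deriv_id, id, Pi.smul_apply, Pi.mul_apply, Pi.sub_apply, smul_eq_mul]
  field_simp
  ring

lemma w_isBigO : w =O[⊤] (decay ^ 2) := by
  refine isBigO_top.2 ⟨6, fun R => ?_⟩
  have hpos := one_add_sq_div_pos R
  rw [w, norm_inv, Real.norm_of_nonneg hpos.le, Pi.pow_apply, decay, norm_pow, norm_inv,
    Real.norm_of_nonneg (by positivity : (0 : ℝ) ≤ 1 + |R|), inv_pow, ← div_eq_mul_inv,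
    inv_le_comm₀ hpos (by positivity), inv_div, div_le_iff₀ (by norm_num)]
  nlinarith [sq_nonneg (|R| - 1), sq_abs R]

lemma id_mul_w_isBigO : (id * w) =O[⊤] decay := by
  have h_id : (id : ℝ → ℝ) =O[⊤] decay⁻¹ := isBigO_top.2 ⟨1, fun R => by
    simp [decay, abs_of_nonneg (add_nonneg zero_le_one (abs_nonneg R))]⟩
  refine (h_id.mul w_isBigO).congr_right fun R => ?_
  have hpos := (decay_pos R).ne'
  simp only [Pi.inv_apply, Pi.pow_apply]
  field_simp

/-- The two bounds need each other: `w' = -(2/3) (R w) w` and `(R w)' = 2 w² - w` express the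
derivatives of `w` and `R w` as polynomials in these two functions. -/
lemma iteratedDeriv_w_isBigO (n : ℕ) :
    iteratedDeriv n w =O[⊤] (decay ^ (2 + n)) ∧
      iteratedDeriv n (id * w) =O[⊤] (decay ^ (1 + n)) := by
  have hw {m : ℕ} : ContDiff ℝ m w := contDiff_w.of_le (mod_cast le_top)
  have hidw {m : ℕ} : ContDiff ℝ m (id * w) := contDiff_id.mul hw
  induction n using Nat.strong_induction_on with
  | _ n ih =>
    rcases n with _ | n
    · simpa only [iteratedDeriv_zero, add_zero, pow_one] using ⟨w_isBigO, id_mul_w_isBigO⟩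
    have hw_le (m : ℕ) (hm : m ≤ n) := (ih m (by omega)).1
    have hidw_le (m : ℕ) (hm : m ≤ n) := (ih m (by omega)).2
    have hidw_mul_w := iteratedDeriv_mul_isBigO hidw hw hidw_le hw_le
    have hw_mul_w := iteratedDeriv_mul_isBigO hw hw hw_le hw_le
    constructor
    · have h : iteratedDeriv n ((-(2 / 3) : ℝ) • (id * w * w)) =
          (-(2 / 3) : ℝ) • iteratedDeriv n (id * w * w) :=
        funext fun R => iteratedDeriv_const_smul_field _ _
      rw [iteratedDeriv_succ', deriv_w, h]
      exact (hidw_mul_w.const_smul_left _).trans (decay_pow_isBigO_decay_pow (by omega))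
    · have h : iteratedDeriv n ((2 : ℝ) • (w * w) - w) =
          (2 : ℝ) • iteratedDeriv n (w * w) - iteratedDeriv n w := by
        have hsmul : ContDiff ℝ n ((2 : ℝ) • (w * w)) := contDiff_const.smul (hw.mul hw)
        funext R
        rw [iteratedDeriv_sub hsmul.contDiffAt hw.contDiffAt,
          iteratedDeriv_const_smul_field, Pi.sub_apply, Pi.smul_apply]
      rw [iteratedDeriv_succ', deriv_id_mul_w, h]
      exact ((hw_mul_w.const_smul_left _).trans (decay_pow_isBigO_decay_pow (by omega))).sub
        ((hw_le n le_rfl).trans (decay_pow_isBigO_decay_pow (by omega)))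

lemma w_mem_symbol : w ∈ symbol 2 :=
  ⟨contDiff_w, fun R => by simp [w], fun n => (iteratedDeriv_w_isBigO n).1⟩

lemma id_mul_w_mem_symbol : id * w ∈ symbol 1 :=
  ⟨contDiff_id.mul contDiff_w, fun R => by simp [w], fun n => (iteratedDeriv_w_isBigO n).2⟩

lemma U_mem_symbol : U ∈ symbol 4 := by
  have hU : U = (10 : ℝ) • (w * w) - (20 / 3 : ℝ) • (id * w * (id * w) * w) := by
    funext R
    simp only [U, w, Pi.sub_apply, Pi.smul_apply, Pi.mul_apply, id, smul_eq_mul]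
    field_simp
  rw [hU]
  exact sub_mem (Submodule.smul_mem _ _ (mul_mem_symbol w_mem_symbol w_mem_symbol))
    (Submodule.smul_mem _ _ (mul_mem_symbol
      (mul_mem_symbol id_mul_w_mem_symbol id_mul_w_mem_symbol) w_mem_symbol))

lemma isAdmissiblePotential_five_div_sq :
    IsAdmissiblePotential fun R => 5 / (1 + R ^ 2 / 3) ^ 2 where
  mem_symbol := by
    have hV : (fun R : ℝ => 5 / (1 + R ^ 2 / 3) ^ 2) = (5 : ℝ) • (w * w) := by
      funext R
      simp only [w, Pi.smul_apply, Pi.mul_apply, smul_eq_mul]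
      field_simp
    have hw : (5 : ℝ) • (w * w) ∈ symbol 4 :=
      Submodule.smul_mem _ _ (mul_mem_symbol w_mem_symbol w_mem_symbol)
    rw [hV]
    exact symbol_le_symbol (Nat.zero_le _) (by norm_num) hw
  antitoneOn R hR S _ hRS := by
    have hR₀ : 0 ≤ R := hR
    dsimp only
    gcongr
  nonneg R _ := by positivity

end Potential

section General

variable {V W : ℝ → ℝ} {d : ℕ}

theorem iterated_commutator_identity_general (hV : IsAdmissiblePotential V) (hW : W ∈ symbol d)
    (hd : 2 ≤ d) (hpar : Even d) (k : ℕ) :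
    ∃ (Uodd Ueven : ℕ → ℝ → ℝ) (C : ℝ), 0 < C ∧
      (∀ j, ContDiff ℝ ∞ (Uodd j) ∧ ∀ R, Uodd j (-R) = -Uodd j R) ∧
      (∀ l, ContDiff ℝ ∞ (Ueven l) ∧ ∀ R, Ueven l (-R) = Ueven l R) ∧
      (∀ R, 0 ≤ R → ∀ j < k, ∀ l ≤ k,
        (1 + R) * |Uodd j R| + |Ueven l R| ≤ C / (1 + R) ^ (d + 2 * k)) ∧
      ∀ ξ > 0, ∀ η > 0, ∀ f g, IsDirichletEigenfunction V ξ f → IsDirichletEigenfunction V η g →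
        IntegrableOn (fun R => W R * f R * g R) (Ioi 0) ∧
        IntegrableOn (fun R => ((∑ j ∈ range k, ξ ^ j * Uodd j R * deriv f R)
          + ∑ l ∈ range (k + 1), ξ ^ l * Ueven l R * f R) * g R) (Ioi 0) ∧
        (η - ξ) ^ (2 * k) * (∫ R in Ioi 0, W R * f R * g R) =
          ∫ R in Ioi 0, ((∑ j ∈ range k, ξ ^ j * Uodd j R * deriv f R)
            + ∑ l ∈ range (k + 1), ξ ^ l * Ueven l R * f R) * g R := by
  obtain ⟨b, hb, a, ha, hid⟩ := exists_iterated_commutator hV hW hd hpar (2 * k)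
  rw [show (2 * k + 1) / 2 = k by omega, show 2 * k / 2 = k by omega] at hb ha
  obtain ⟨Uodd, hUodd, hb_eq⟩ := id hb
  obtain ⟨Ueven, hUeven, ha_eq⟩ := id ha
  obtain ⟨B, hB, hUodd_le⟩ := exists_uniform_bound_of_mem_symbol hUodd k
  obtain ⟨A, hA, hUeven_le⟩ := exists_uniform_bound_of_mem_symbol hUeven (k + 1)
  have hodd : Odd (d + 1 + 2 * k) := hpar.add_one.add_even (even_two_mul k)
  have heven : Even (d + 2 * k) := hpar.add (even_two_mul k)
  refine ⟨Uodd, Ueven, B + A + 1, by positivity,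
    fun j => ⟨contDiff_of_mem_symbol (hUodd j), fun R => ?_⟩,
    fun l => ⟨contDiff_of_mem_symbol (hUeven l), fun R => ?_⟩,
    fun R hR j hj l hl => ?_, fun ξ hξ η hη f g hf hg => ?_⟩
  · rw [apply_neg_of_mem_symbol (hUodd j), hodd.neg_one_pow, neg_one_mul]
  · rw [apply_neg_of_mem_symbol (hUeven l), heven.neg_one_pow, one_mul]
  · calc (1 + R) * |Uodd j R| + |Ueven l R|
        ≤ (1 + R) * (B / (1 + R) ^ (d + 1 + 2 * k)) + A / (1 + R) ^ (d + 2 * k) := by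
          gcongr
          exacts [hUodd_le j hj R hR, hUeven_le l (by omega) R hR]
      _ = (B + A) / (1 + R) ^ (d + 2 * k) := by
          rw [add_right_comm, pow_succ]
          field_simp
      _ ≤ (B + A + 1) / (1 + R) ^ (d + 2 * k) := by
          gcongr ?_ / _
          linarith
  · have hsum (R : ℝ) : ((∑ j ∈ range k, ξ ^ j * Uodd j R * deriv f R)
        + ∑ l ∈ range (k + 1), ξ ^ l * Ueven l R * f R) * g R =
          (firstOrder (b ξ) (a ξ) f * g) R := by
      simp only [firstOrder, hb_eq, ha_eq, Pi.add_apply, Pi.mul_apply, Finset.sum_apply,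
        Pi.smul_apply, smul_eq_mul, sum_mul]
    have hint_W : IntegrableOn (fun R => W R * f R * g R) (Ioi 0) := by
      simpa [firstOrder] using! integrableOn_firstOrder_mul hV hξ hη hf hg
        (zero_mem (symbol 2)) le_rfl hW hd
    have hint : IntegrableOn (firstOrder (b ξ) (a ξ) f * g) (Ioi 0) :=
      integrableOn_firstOrder_mul hV hξ hη hf hg (apply_mem_symbol_of_mem_pencil hb ξ) (by omega)
        (apply_mem_symbol_of_mem_pencil ha ξ) (by omega)
    simp only [hsum]
    exact ⟨hint_W, hint, hid ξ hξ η hη f g hf hg⟩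

end General

end Development

/-- The iterated commutator identity
`(η-ξ)^{2k} F(ξ,η) = ∫₀^∞ [Σ_{j<k} ξ^j U^{odd}_{kj} ∂_Rφ(R,ξ) + Σ_{ℓ≤k} ξ^ℓ U^{even}_{kℓ} φ(R,ξ)] φ(R,η) dR`
with smooth odd/even weights decaying like `(1+R)^{-4-2k}`. -/
theorem iterated_commutator_identity
    (φ : ℝ → ℝ → ℝ)
    (hφ : ∀ ξ : ℝ,
      φ ξ 0 = 0 ∧ deriv (φ ξ) 0 = 1 ∧
      (∀ R : ℝ, HasDerivAt (φ ξ) (deriv (φ ξ) R) R) ∧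
      (∀ R : ℝ, HasDerivAt (deriv (φ ξ)) (deriv (deriv (φ ξ)) R) R) ∧
      (∀ R : ℝ, - deriv (deriv (φ ξ)) R - (5 / (1 + R ^ 2 / 3) ^ 2) * φ ξ R = ξ * φ ξ R))
    (k : ℕ) (hk : 1 ≤ k) :
    ∃ (Uodd Ueven : ℕ → ℝ → ℝ) (C : ℝ), 0 < C ∧
      -- the weights are smooth, odd resp. even
      (∀ j : ℕ, j ≤ k - 1 → ContDiff ℝ (⊤ : ℕ∞) (Uodd j) ∧ ∀ R : ℝ, Uodd j (-R) = -Uodd j R) ∧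
      (∀ l : ℕ, l ≤ k → ContDiff ℝ (⊤ : ℕ∞) (Ueven l) ∧ ∀ R : ℝ, Ueven l (-R) = Ueven l R) ∧
      -- decay bounds
      (∀ R : ℝ, 0 ≤ R → ∀ j : ℕ, j ≤ k - 1 → ∀ l : ℕ, l ≤ k →
        (1 + R) * |Uodd j R| + |Ueven l R| ≤ C / (1 + R) ^ (4 + 2 * k)) ∧
      -- convergence of both integrals and the identity
      (∀ ξ : ℝ, 0 < ξ → ∀ η : ℝ, 0 < η →
        IntegrableOn (fun R => U R * φ ξ R * φ η R) (Set.Ioi 0) ∧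
        IntegrableOn (fun R =>
          ((∑ j ∈ Finset.range k, ξ ^ j * Uodd j R * deriv (φ ξ) R)
            + ∑ l ∈ Finset.range (k + 1), ξ ^ l * Ueven l R * φ ξ R) * φ η R)
          (Set.Ioi 0) ∧
        (η - ξ) ^ (2 * k) * (∫ R in Set.Ioi (0 : ℝ), U R * φ ξ R * φ η R)
          = ∫ R in Set.Ioi (0 : ℝ),
              ((∑ j ∈ Finset.range k, ξ ^ j * Uodd j R * deriv (φ ξ) R)
                + ∑ l ∈ Finset.range (k + 1), ξ ^ l * Ueven l R * φ ξ R) * φ η R) := by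
  obtain ⟨Uodd, Ueven, C, hC, hodd, heven, hdecay, hid⟩ :=
    iterated_commutator_identity_general isAdmissiblePotential_five_div_sq U_mem_symbol
      (by norm_num) (by decide) k
  have hφ' (ξ : ℝ) : IsDirichletEigenfunction _ ξ (φ ξ) :=
    ⟨(hφ ξ).1, fun R => ((hφ ξ).2.2.1 R).differentiableAt,
      fun R => ((hφ ξ).2.2.2.1 R).differentiableAt, (hφ ξ).2.2.2.2⟩
  exact ⟨Uodd, Ueven, C, hC, fun j _ => hodd j, fun l _ => heven l,
    fun R hR j hj => hdecay R hR j (by omega), fun ξ hξ η hη => hid ξ hξ η hη _ _ (hφ' ξ) (hφ' η)⟩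

end CommutatorIdentity
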